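/- Let B be a type with the discrete topology, let ℕ → B carry the product topology, let A : Set B be countable, equip ↥A with the discrete topology and ℕ → ↥A with the product topology, and let ι : (ℕ → ↥A) → (ℕ → B) be the map x ↦ (fun n => (x n : B)). If S ⊆ (ℕ → ↥A) satisfies S = ⋃ i, G i where each G i is a Gδ set in ℕ → ↥A, then there exists a triply indexed family F : ℕ → ℕ → ℕ → Set (ℕ → B) of sets closed in ℕ → B such that ι '' S = ⋃ i, ⋂ j, ⋃ k, F i j k. (A Σ⁰₃ set of A^ω lands in Σ⁰₄ when the alphabet is expanded to B.) -/

import Mathlib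

/-!
Since `B` is discrete, `A` is closed in `B`, so the inclusion of `ℕ → A` into `ℕ → B` is a closed
embedding and its range is a `Gδ` set. An embedding with `Gδ` range maps `Gδ` sets to `Gδ` sets, so
expanding the alphabet does not even raise the Borel level: the image is again `Σ⁰₃`. Writing each
open set of a metrizable space as a countable union of closed sets turns this into a `Σ⁰₄` form.
-/

open Set Topology

section

variable {X Y : Type*} [TopologicalSpace X] [TopologicalSpace Y]

theorem isGδ_image_of_isInducing {f : X → Y} (hf : IsInducing f) (hrange : IsGδ (range f))
    {s : Set X} (hs : IsGδ s) : IsGδ (f '' s) := by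
  obtain ⟨U, hU, rfl⟩ := isGδ_iff_eq_iInter_nat.1 hs
  choose V hV hVU using fun j => hf.isOpen_iff.1 (hU j)
  have image_eq : f '' ⋂ j, U j = (⋂ j, V j) ∩ range f := by
    simp only [← hVU, ← preimage_iInter, image_preimage_eq_inter_range]
  rw [image_eq]
  exact (IsGδ.iInter_of_isOpen hV).inter hrange

theorem exists_iUnion_isClosed_eq_of_isOpen [PerfectlyNormalSpace X] {U : Set X} (hU : IsOpen U) :
    ∃ K : ℕ → Set X, (∀ k, IsClosed (K k)) ∧ U = ⋃ k, K k := by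
  obtain ⟨V, hV, hUV⟩ := isGδ_iff_eq_iInter_nat.1 hU.isClosed_compl.isGδ
  refine ⟨fun k => (V k)ᶜ, fun k => (hV k).isClosed_compl, ?_⟩
  rw [← compl_iInter, ← hUV, compl_compl]

/- The openness of the inner unions records that the image is in fact `Σ⁰₃`. -/
theorem sigma03_lands_in_sigma04_general [PerfectlyNormalSpace Y] {f : X → Y} (hf : IsInducing f)
    (hrange : IsGδ (range f)) {G : ℕ → Set X} (hG : ∀ i, IsGδ (G i)) :
    ∃ F : ℕ → ℕ → ℕ → Set Y, (∀ i j k, IsClosed (F i j k)) ∧ (∀ i j, IsOpen (⋃ k, F i j k)) ∧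
      f '' ⋃ i, G i = ⋃ i, ⋂ j, ⋃ k, F i j k := by
  choose U hU hGU using fun i =>
    isGδ_iff_eq_iInter_nat.1 (isGδ_image_of_isInducing hf hrange (hG i))
  choose F hF hUF using fun i j => exists_iUnion_isClosed_eq_of_isOpen (hU i j)
  refine ⟨F, hF, fun i j => hUF i j ▸ hU i j, ?_⟩
  simp only [image_iUnion, hGU, ← hUF]

theorem isClosedEmbedding_pi_subtypeVal {ι : Type*} {A : Set X} (hA : IsClosed A) :
    IsClosedEmbedding (fun (x : ι → ↥A) (n : ι) => (x n : X)) :=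
  .piMap fun _ => hA.isClosedEmbedding_subtypeVal

end

theorem sigma03_lands_in_sigma04
    (B : Type*) [TopologicalSpace B] [DiscreteTopology B] (A : Set B)
    (hA : A.Countable) (S : Set (ℕ → ↥A)) (G : ℕ → Set (ℕ → ↥A))
    (hG : ∀ i, IsGδ (G i)) (hS : S = ⋃ i, G i) :
    ∃ F : ℕ → ℕ → ℕ → Set (ℕ → B), (∀ i j k, IsClosed (F i j k)) ∧
      (fun (x : ℕ → ↥A) (n : ℕ) => (x n : B)) '' S = ⋃ i, ⋂ j, ⋃ k, F i j k := by
  have hι := isClosedEmbedding_pi_subtypeVal (ι := ℕ) (isClosed_discrete A)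
  obtain ⟨F, hF, -, hFG⟩ :=
    sigma03_lands_in_sigma04_general hι.isInducing hι.isClosed_range.isGδ hG
  exact ⟨F, hF, hS ▸ hFG⟩
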